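/- (Theorem 4, extended Katznelson–Tzafriri theorem) Let T : X → X be a bounded linear operator on a complex Banach space X which is power bounded, i.e. sup_{n ≥ 1} ‖T^n‖ < ∞, and let ϑ ∈ ℂ with |ϑ| = 1. If σ(T) ∩ ∂D ⊆ {ϑ}, then lim_{n→∞} ‖T^{n+1} − ϑ T^n‖ = 0 in the operator norm. -/

import Mathlib

open Filter Topology

/-- Gelfand's theorem. -/
theorem kt_gelfand {E : Type*} [NormedAddCommGroup E] [NormedSpace ℂ E] [CompleteSpace E]
    (V V' : E →L[ℂ] E) (h1 : V * V' = 1) (h2 : V' * V = 1)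
    (hV : ∀ x, ‖V x‖ ≤ ‖x‖) (hV' : ∀ x, ‖V' x‖ ≤ ‖x‖)
    (hs : ∀ l : ℂ, ‖l‖ = 1 → l ≠ 1 → IsUnit (l • (1 : E →L[ℂ] E) - V)) : V = 1 := by
  have hnV : ‖V‖ ≤ 1 := V.opNorm_le_bound zero_le_one (by simpa using hV)
  have hnV' : ‖V'‖ ≤ 1 := V'.opNorm_le_bound zero_le_one (by simpa using hV')
  have hiso : ∀ x, ‖V x‖ = ‖x‖ := fun x => le_antisymm (hV x) (by
    have := hV' (V x)
    rwa [← mul_apply_eq_comp, h2, one_apply_eq_self] at this)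
  set A : ℂ → (E →L[ℂ] E) := fun w => (1 + w) • (1 : E →L[ℂ] E) - w • V with hA
  have hu : ∀ w, IsUnit (A w) := by
    intro w
    rcases lt_trichotomy ‖w‖ ‖1 + w‖ with h | h | h
    · have h0 : (1 + w) ≠ 0 := by
        intro h0; rw [h0, norm_zero] at h; exact absurd (norm_nonneg w) (not_le.2 h)
      have : IsUnit (1 - (w / (1 + w)) • V) := by
        apply isUnit_one_sub_of_norm_lt_one
        rw [norm_smul, norm_div]
        have : ‖w‖ / ‖1 + w‖ < 1 := by
          rw [div_lt_one (lt_of_le_of_lt (norm_nonneg _) h)]; exact h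
        nlinarith [norm_nonneg V, norm_nonneg w, div_nonneg (norm_nonneg w) (norm_nonneg (1+w))]
      have e : A w = (Units.mk0 _ h0) • (1 - (w / (1 + w)) • V) := by
        simp only [hA, Units.smul_mk0, smul_sub, smul_smul]
        congr 2; field_simp
      rw [e]; exact this.smul _
    · have h0 : w ≠ 0 := by rintro rfl; simp at h
      have : IsUnit (((1 + w) / w) • (1 : E →L[ℂ] E) - V) := by
        apply hs
        · rw [norm_div, ← h, div_self (norm_ne_zero_iff.2 h0)]
        · intro h'; rw [div_eq_one_iff_eq h0] at h'; simp at h'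
      have e : A w = (Units.mk0 _ h0) • (((1 + w) / w) • (1 : E →L[ℂ] E) - V) := by
        simp only [hA, Units.smul_mk0, smul_sub, smul_smul]
        congr 2; field_simp
      rw [e]; exact this.smul _
    · have h0 : w ≠ 0 := by
        rintro rfl; rw [norm_zero] at h; exact absurd (norm_nonneg _) (not_le.2 h)
      have : IsUnit (1 - ((1 + w) / w) • V') := by
        apply isUnit_one_sub_of_norm_lt_one
        rw [norm_smul, norm_div]
        have : ‖1 + w‖ / ‖w‖ < 1 := by
          rw [div_lt_one (lt_of_le_of_lt (norm_nonneg _) h)]; exact h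
        nlinarith [norm_nonneg V', div_nonneg (norm_nonneg (1 + w)) (norm_nonneg w)]
      have hVu : IsUnit V := ⟨⟨V, V', h1, h2⟩, rfl⟩
      have e : A w = (Units.mk0 (-w) (neg_ne_zero.2 h0)) • (V * (1 - ((1 + w) / w) • V')) := by
        simp only [hA, Units.smul_mk0, mul_sub, smul_sub, mul_smul_comm, h1, mul_one, smul_smul]
        rw [show -w * ((1 + w) / w) = -(1 + w) by field_simp]
        module
      rw [e]; exact (hVu.mul this).smul _
  set F : ℂ → (E →L[ℂ] E) := fun w => Ring.inverse (A w) with hF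
  have hFA : ∀ w, A w * F w = 1 := fun w => Ring.mul_inverse_cancel _ (hu w)
  have hdA : Differentiable ℂ A := by
    intro w; simp only [hA]; fun_prop
  have hd : Differentiable ℂ F := fun w =>
    (differentiableAt_inverse (𝕜 := ℂ) (hu w)).comp w (hdA w)
  have hFb : ∀ w, |‖1 + w‖ - ‖w‖| * ‖F w‖ ≤ 1 := by
    intro w
    have hx : ∀ x, |‖1 + w‖ - ‖w‖| * ‖F w x‖ ≤ ‖x‖ := by
      intro x
      have e : A w (F w x) = x := by
        rw [← mul_apply_eq_comp, hFA, one_apply_eq_self]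
      have : |‖(1 + w) • (F w x)‖ - ‖w • V (F w x)‖| ≤ ‖A w (F w x)‖ := by
        simpa [hA] using abs_norm_sub_norm_le ((1 + w) • (F w x)) (w • V (F w x))
      rw [e, norm_smul, norm_smul, hiso, ← sub_mul, abs_mul, abs_norm] at this
      exact this
    rcases (abs_nonneg (‖1 + w‖ - ‖w‖)).eq_or_lt with h | h
    · rw [← h]; simp
    · rw [mul_comm, ← le_div_iff₀ h]
      refine (F w).opNorm_le_bound (by positivity) fun x => ?_
      rw [div_mul_eq_mul_div, le_div_iff₀ h, one_mul, mul_comm]; exact hx x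
  have hb : ∀ w, ‖F w‖ ≤ 4 := by
    intro w
    set R : ℝ := 2 * ‖w + 1/2‖ + 1 with hR
    have hR1 : 1 ≤ R := by rw [hR]; linarith [norm_nonneg (w + 1/2)]
    have key : ‖((w + 1/2)^2 + (R:ℂ)^2) • F w‖ ≤ R * (2 * R + 1) := by
      refine Complex.norm_le_of_forall_mem_frontier_norm_le (f := fun z => ((z + 1/2)^2 + (R:ℂ)^2) • F z)
        (U := Metric.ball (-1/2 : ℂ) R)
        Metric.isBounded_ball (Differentiable.diffContOnCl ?_) ?_ ?_
      · fun_prop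
      · intro z hz
        rw [frontier_ball _ (by positivity), mem_sphere_iff_norm] at hz
        have hz' : ‖z + 1/2‖ = R := by rw [← hz]; congr 1; ring
        have hsq : (z.re + 1/2)^2 + z.im^2 = R^2 := by
          rw [← hz', Complex.sq_norm, Complex.normSq_apply]; simp; ring
        have e : (z + 1/2)^2 + (R:ℂ)^2 = ((2 * z.re + 1 : ℝ) : ℂ) * (z + 1/2) := by
          rw [← Complex.ofReal_pow, ← hsq]
          apply Complex.ext
          · simp [pow_two]; ring
          · simp [pow_two]; ring
        have e2 : |2 * z.re + 1| = |‖1 + z‖ - ‖z‖| * (‖1 + z‖ + ‖z‖) := by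
          have : 2 * z.re + 1 = (‖1 + z‖ - ‖z‖) * (‖1 + z‖ + ‖z‖) := by
            have a := Complex.sq_norm (1 + z)
            have b := Complex.sq_norm z
            rw [Complex.normSq_apply] at a b
            simp at a
            linarith
          rw [this, abs_mul, abs_of_nonneg (a := ‖1 + z‖ + ‖z‖) (by positivity)]
        have e3 : ‖1 + z‖ + ‖z‖ ≤ 2 * R + 1 := by
          have a : ‖1 + z‖ ≤ ‖z + 1/2‖ + ‖(1/2 : ℂ)‖ := by
            rw [show 1 + z = (z + 1/2) + 1/2 by ring]; exact norm_add_le _ _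
          have b : ‖z‖ ≤ ‖z + 1/2‖ + ‖(1/2 : ℂ)‖ := by
            conv_lhs => rw [show z = (z + 1/2) - 1/2 by ring]
            exact norm_sub_le _ _
          have c : ‖(1/2 : ℂ)‖ = 1/2 := by simp
          rw [hz', c] at a b; linarith
        rw [norm_smul, e, norm_mul, Complex.norm_real, hz', Real.norm_eq_abs, e2]
        have := hFb z
        calc _ = R * ((|‖1 + z‖ - ‖z‖| * ‖F z‖) * (‖1 + z‖ + ‖z‖)) := by ring
          _ ≤ R * (1 * (2 * R + 1)) := by gcongr
          _ = _ := by ring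
      · apply subset_closure
        rw [mem_ball_iff_norm, show w - -1/2 = w + 1/2 by ring]
        linarith [norm_nonneg (w + 1/2)]
    have hlow : 3 / 4 * R^2 ≤ ‖(w + 1/2)^2 + (R:ℂ)^2‖ := by
      have : ‖(R:ℂ)^2‖ - ‖(w + 1/2)^2‖ ≤ ‖(w + 1/2)^2 + (R:ℂ)^2‖ := by
        have := norm_sub_norm_le ((R:ℂ)^2) (-(w + 1/2)^2)
        rwa [norm_neg, sub_neg_eq_add, add_comm ((R:ℂ)^2)] at this
      rw [norm_pow, norm_pow, Complex.norm_real, Real.norm_eq_abs, sq_abs] at this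
      nlinarith [norm_nonneg (w + 1/2)]
    rw [norm_smul] at key
    have : 3 / 4 * R^2 * ‖F w‖ ≤ R * (2 * R + 1) :=
      (mul_le_mul_of_nonneg_right hlow (norm_nonneg _)).trans key
    by_contra! hcon
    nlinarith [mul_pos (show 0 < 3/4 * R^2 by positivity) (sub_pos.2 hcon)]
  have hconst : F (-1) = F 0 := by
    apply hd.apply_eq_apply_of_bounded
    rw [isBounded_iff_forall_norm_le]
    exact ⟨4, by rintro _ ⟨w, rfl⟩; exact hb w⟩
  have a0 := hFA 0
  have a1 := hFA (-1)
  rw [hconst] at a1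
  simp [hA] at a0 a1
  rw [a0, mul_one] at a1
  exact a1

theorem kt_abs {Q : Type*} [NormedAddCommGroup Q] [NormedSpace ℂ Q] [CompleteSpace Q]
    (W W' T : Q →L[ℂ] Q) (h1 : W * W' = 1) (h2 : W' * W = 1)
    (hW : ∀ x, ‖W x‖ ≤ ‖x‖) (hW' : ∀ x, ‖W' x‖ ≤ ‖x‖) (hc : T * W = W * T)
    (hs : ∀ l : ℂ, ‖l‖ = 1 → l ≠ 1 → ∃ R : Q →L[ℂ] Q, (l • 1 - T) * R = 1 ∧
      R * (l • 1 - T) = 1 ∧ R * W = W * R)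
    (y : Q) (hy : T y = W y) : W y = y := by
  set Y : Submodule ℂ Q := (T - W).ker with hY
  have hmem : ∀ x, x ∈ Y ↔ T x = W x := fun x => by
    simp [hY, sub_eq_zero]
  have hYc : IsClosed (Y : Set Q) := (T - W).isClosed_ker
  have : CompleteSpace Y := hYc.completeSpace_coe
  have hc' : T * W' = W' * T := by
    calc T * W' = (W' * W) * (T * W') := by rw [h2, one_mul]
      _ = W' * (W * T) * W' := by simp only [mul_assoc]
      _ = W' * T * (W * W') := by rw [← hc]; simp only [mul_assoc]
      _ = _ := by rw [h1, mul_one]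
  have pres : ∀ S : Q →L[ℂ] Q, T * S = S * T → S * W = W * S → ∀ x ∈ Y, S x ∈ Y := by
    intro S hT hSW x hx
    rw [hmem] at hx ⊢
    have a := DFunLike.congr_fun hT x
    have b := DFunLike.congr_fun hSW x
    simp only [mul_apply_eq_comp] at a b
    rw [a, hx, b]
  have pW := pres W hc rfl
  have pW' := pres W' hc' (by rw [h1, h2])
  have g := kt_gelfand (E := Y) (W.restrict pW) (W'.restrict pW')
    (by ext x; exact DFunLike.congr_fun h1 (x : Q)) (by ext x; exact DFunLike.congr_fun h2 (x : Q))
    (fun x => hW x) (fun x => hW' x) (by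
      intro l hl hl1
      obtain ⟨R, hR1, hR2, hR3⟩ := hs l hl hl1
      have hRT : T * R = R * T := by
        have : (l • 1 - T) * R = R * (l • 1 - T) := by rw [hR1, hR2]
        simpa [sub_mul, mul_sub] using this
      have pR := pres R hRT hR3
      refine ⟨⟨_, R.restrict pR, ?_, ?_⟩, rfl⟩
      · ext x
        have := DFunLike.congr_fun hR1 (x : Q)
        have h3 := (hmem _).1 (pR x x.2)
        simp at this ⊢
        rw [← h3]; exact this
      · ext x
        have := DFunLike.congr_fun hR2 (x : Q)
        have h3 := (hmem _).1 x.2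
        simp at this ⊢
        rw [← h3]; exact this)
  have := DFunLike.congr_fun g (⟨y, (hmem y).2 hy⟩ : Y)
  exact congrArg Subtype.val this

/-- descent of an operator to a quotient -/
theorem kt_desc {M : Type*} [NormedAddCommGroup M] [NormedSpace ℂ M] (S : Submodule ℂ M)
    (f : M →L[ℂ] M) (hf : ∀ x ∈ S, f x ∈ S) (c : ℝ) (hc : 0 ≤ c) (hb : ∀ x, ‖f x‖ ≤ c * ‖x‖) :
    ∃ g : (M ⧸ S) →L[ℂ] (M ⧸ S), (∀ x, g (Submodule.Quotient.mk x) = Submodule.Quotient.mk (f x)) ∧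
      ∀ q, ‖g q‖ ≤ c * ‖q‖ := by
  have hbd : ∀ q, ‖S.mapQ S (f : M →ₗ[ℂ] M) hf q‖ ≤ c * ‖q‖ := by
    intro q
    refine le_of_forall_pos_le_add fun ε hε => ?_
    obtain ⟨m, rfl, hm⟩ := Submodule.Quotient.norm_mk_lt q (ε := ε / (c + 1)) (by positivity)
    rw [Submodule.mapQ_apply]
    refine (Submodule.Quotient.norm_mk_le S _).trans ((hb m).trans ?_)
    have : c * (ε / (c + 1)) ≤ ε := by
      rw [mul_div_assoc', div_le_iff₀ (by positivity)]; nlinarith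
    have := mul_le_mul_of_nonneg_left hm.le hc
    linarith
  exact ⟨(S.mapQ S (f : M →ₗ[ℂ] M) hf).mkContinuous c hbd, fun x => rfl, hbd⟩

theorem kt_one {B : Type*} [NormedRing B] [NormedAlgebra ℂ B] [CompleteSpace B]
    (T : B) (C : ℝ) (hT : ∀ n : ℕ, ‖T ^ n‖ ≤ C)
    (hs : ∀ l : ℂ, ‖l‖ = 1 → l ≠ 1 → IsUnit (l • (1 : B) - T)) :
    Tendsto (fun n : ℕ => T ^ (n + 1) - T ^ n) atTop (𝓝 0) := by
  let M := BoundedContinuousFunction ℕ B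
  let S : Submodule ℂ M :=
    { carrier := {s | Tendsto (fun n => s n) atTop (𝓝 0)}
      add_mem' := fun {a b} (ha : Tendsto (fun n => a n) atTop (𝓝 0))
          (hb : Tendsto (fun n => b n) atTop (𝓝 0)) => by
        have := ha.add hb
        rw [add_zero] at this
        exact this
      zero_mem' := (tendsto_const_nhds : Tendsto (fun _ : ℕ => (0 : B)) atTop (𝓝 0))
      smul_mem' := fun c a (ha : Tendsto (fun n => a n) atTop (𝓝 0)) => by
        have := ha.const_smul c
        rw [smul_zero] at this
        exact this }
  have hS : ∀ s : M, s ∈ S ↔ Tendsto (fun n => s n) atTop (𝓝 0) := fun s => Iff.rfl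
  have hSc : IsClosed (S : Set M) := by
    rw [← closure_subset_iff_isClosed]
    intro s hs
    rw [SetLike.mem_coe, hS, Metric.tendsto_atTop]
    intro ε hε
    obtain ⟨t, ht, hst⟩ := Metric.mem_closure_iff.1 hs (ε / 2) (by positivity)
    obtain ⟨N, hN⟩ := Metric.tendsto_atTop.1 ((hS t).1 ht) (ε / 2) (by positivity)
    refine ⟨N, fun n hn => ?_⟩
    have a := BoundedContinuousFunction.dist_coe_le_dist (f := s) (g := t) n
    have b := hN n hn
    have c := dist_triangle (s n) (t n) 0
    linarith
  have := hSc
  let L : B → (M →L[ℂ] M) := fun A => (ContinuousLinearMap.mul ℂ B A).compLeftContinuousBounded ℕ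
  have hL : ∀ A s n, L A s n = A * s n := fun A s n => rfl
  let sh : M →L[ℂ] M := BoundedContinuousFunction.compContinuousCLM B ℂ ⟨fun n : ℕ => n + 1, continuous_of_discreteTopology⟩
  let sh' : M →L[ℂ] M := BoundedContinuousFunction.compContinuousCLM B ℂ ⟨fun n : ℕ => n - 1, continuous_of_discreteTopology⟩
  have hsh : ∀ s n, sh s n = s (n + 1) := fun s n => rfl
  have hsh' : ∀ s n, sh' s n = s (n - 1) := fun s n => rfl
  obtain ⟨W, hW, hWb⟩ := kt_desc S sh (fun x hx => by
    rw [hS] at hx ⊢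
    exact hx.comp (tendsto_add_atTop_nat 1)) 1 zero_le_one (fun x => by
      rw [one_mul]
      exact (BoundedContinuousFunction.norm_le (norm_nonneg _)).2 fun n => x.norm_coe_le_norm _)
  obtain ⟨W', hW', hWb'⟩ := kt_desc S sh' (fun x hx => by
    rw [hS] at hx ⊢
    exact hx.comp (tendsto_sub_atTop_nat 1)) 1 zero_le_one (fun x => by
      rw [one_mul]
      exact (BoundedContinuousFunction.norm_le (norm_nonneg _)).2 fun n => x.norm_coe_le_norm _)
  have hLd : ∀ A : B, ∃ g : (M ⧸ S) →L[ℂ] (M ⧸ S),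
      ∀ x, g (Submodule.Quotient.mk x) = Submodule.Quotient.mk (L A x) := by
    intro A
    obtain ⟨g, hg, -⟩ := kt_desc S (L A) (fun x hx => by
      rw [hS] at hx ⊢
      have := hx.const_mul A
      rw [mul_zero] at this
      exact this) ‖L A‖ (L A).opNorm_nonneg (fun x => (L A).le_opNorm x)
    exact ⟨g, hg⟩
  choose G hG using hLd
  have qext : ∀ f g : (M ⧸ S) →L[ℂ] (M ⧸ S),
      (∀ x : M, f (Submodule.Quotient.mk x) = g (Submodule.Quotient.mk x)) → f = g := by
    intro f g h
    ext q
    obtain ⟨x, rfl⟩ := Submodule.Quotient.mk_surjective S q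
    exact h x
  have hGW : ∀ A, G A * W = W * G A := by
    intro A
    apply qext; intro x
    rw [mul_apply_eq_comp, mul_apply_eq_comp, hW, hG, hG, hW]
    rfl
  have hGm : ∀ A A' : B, G A * G A' = G (A * A') := by
    intro A A'
    apply qext; intro x
    rw [mul_apply_eq_comp, hG, hG, hG]
    congr 1; ext n
    simp only [hL, mul_assoc]
  have hG1 : G 1 = 1 := by
    apply qext; intro x
    rw [hG, one_apply_eq_self]
    congr 1; ext n
    simp only [hL, one_mul]
  have hGs : ∀ l : ℂ, l • 1 - G T = G (l • 1 - T) := by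
    intro l
    apply qext; intro x
    rw [ContinuousLinearMap.sub_apply, ContinuousLinearMap.smul_apply, one_apply_eq_self, hG, hG,
      ← Submodule.Quotient.mk_smul, ← Submodule.Quotient.mk_sub]
    congr 1; ext n
    simp [hL, sub_mul]
    rfl
  let y : M := BoundedContinuousFunction.ofNormedAddCommGroupDiscrete (fun n => T ^ n) C hT
  have hy : ∀ n, y n = T ^ n := fun n => rfl
  have key := kt_abs W W' (G T) (by
      apply qext; intro x
      rw [mul_apply_eq_comp, hW', hW, one_apply_eq_self]
      congr 1) (by
      apply qext; intro x
      rw [mul_apply_eq_comp, hW, hW', one_apply_eq_self, Submodule.Quotient.eq, hS]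
      apply tendsto_const_nhds.congr'
      filter_upwards [eventually_ge_atTop 1] with n hn
      rw [BoundedContinuousFunction.sub_apply, hsh', hsh, Nat.sub_add_cancel hn, sub_self])
    (by simpa using hWb) (by simpa using hWb') (hGW T) (by
      intro l hl hl1
      obtain ⟨u, hu⟩ := hs l hl hl1
      refine ⟨G (↑u⁻¹), ?_, ?_, hGW _⟩
      · rw [hGs, hGm, ← hu, u.mul_inv, hG1]
      · rw [hGs, hGm, ← hu, u.inv_mul, hG1])
    (Submodule.Quotient.mk y) (by
      rw [hG, hW]
      congr 1; ext n
      rw [hL, hsh, hy, hy, pow_succ'])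
  rw [hW, Submodule.Quotient.eq, hS] at key
  exact key

/-- **Theorem 4, extended Katznelson–Tzafriri theorem.** If `T` is a power-bounded
operator on a complex Banach space `X` and `σ(T) ∩ ∂𝔻 ⊆ {ϑ}` with `|ϑ| = 1`, then
`‖T^{n+1} - ϑ T^n‖ → 0`. -/
theorem katznelson_tzafriri_extended
    (X : Type*) [NormedAddCommGroup X] [NormedSpace ℂ X] [CompleteSpace X]
    (T : X →L[ℂ] X) (hpb : ∃ C : ℝ, ∀ n : ℕ, 1 ≤ n → ‖T ^ n‖ ≤ C)
    (ϑ : ℂ) (hϑ : ‖ϑ‖ = 1)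
    (hspec : spectrum ℂ T ∩ {lam : ℂ | ‖lam‖ = 1} ⊆ {ϑ}) :
    Tendsto (fun n : ℕ => ‖T ^ (n + 1) - ϑ • T ^ n‖) atTop (𝓝 (0 : ℝ)) := by
  obtain ⟨C, hC⟩ := hpb
  have h0 : ϑ ≠ 0 := by rintro rfl; simp at hϑ
  have key := kt_one (ϑ⁻¹ • T) (max C ‖(1 : X →L[ℂ] X)‖) (by
    intro n
    rw [smul_pow, norm_smul, norm_pow, norm_inv, hϑ, inv_one, one_pow, one_mul]
    rcases Nat.eq_zero_or_pos n with rfl | hn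
    · rw [pow_zero]; exact le_max_right _ _
    · exact (hC n hn).trans (le_max_left _ _)) (by
    intro l hl hl1
    have hu : IsUnit (algebraMap ℂ (X →L[ℂ] X) (ϑ * l) - T) := by
      by_contra hcon
      have : ϑ * l ∈ ({ϑ} : Set ℂ) := hspec ⟨hcon, by simp [hϑ, hl]⟩
      rw [Set.mem_singleton_iff] at this
      exact hl1 (mul_left_cancel₀ h0 (by rw [this, mul_one]))
    have e : l • (1 : X →L[ℂ] X) - ϑ⁻¹ • T =
        (Units.mk0 ϑ⁻¹ (inv_ne_zero h0)) • (algebraMap ℂ (X →L[ℂ] X) (ϑ * l) - T) := by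
      rw [Algebra.algebraMap_eq_smul_one, Units.smul_mk0, smul_sub, smul_smul,
        inv_mul_cancel_left₀ h0]
    rw [e]; exact hu.smul _)
  have key2 := key.norm
  rw [norm_zero] at key2
  refine key2.congr fun n => ?_
  have e : (ϑ⁻¹ • T) ^ (n + 1) - (ϑ⁻¹ • T) ^ n = ϑ⁻¹ ^ (n + 1) • (T ^ (n + 1) - ϑ • T ^ n) := by
    rw [smul_pow, smul_pow, smul_sub, smul_smul, pow_succ ϑ⁻¹ n, mul_assoc (ϑ⁻¹ ^ n), inv_mul_cancel₀ h0, mul_one]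
  rw [e, norm_smul, norm_pow, norm_inv, hϑ, inv_one, one_pow, one_mul]
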